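/- (Strict increase of the mid-phase) Let (θ_1,...,θ_N) be a global solution of the Winfree model of order n with identical natural frequencies ν_i = ν > 0 for all i and coupling strength 0 < κ < ν/(2^n a_n). Suppose M and m are indices such that θ_M(t) = max_i θ_i(t) and θ_m(t) = min_i θ_i(t) for all t ≥ 0, and set A(t) := (θ_M(t) + θ_m(t))/2. Then for every t ≥ 0, A'(t) ≥ ν − κ 2^n a_n > 0; in particular A is strictly increasing on [0, ∞). -/

import Mathlib

open Real Filter

/-- Normalizing constant `a_n = 2^n (n!)^2 / (2n)!`. -/
noncomputable def aW (n : ℕ) : ℝ :=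
  2 ^ n * (Nat.factorial n : ℝ) ^ 2 / (Nat.factorial (2 * n) : ℝ)

/-- Influence function `I_n(θ) = a_n (1 + cos θ)^n`. -/
noncomputable def influence (n : ℕ) (θ : ℝ) : ℝ := aW n * (1 + Real.cos θ) ^ n

/-- Sensitivity function `S(θ) = -sin θ`. -/
noncomputable def sens (θ : ℝ) : ℝ := -Real.sin θ

/-- A global solution of the Winfree model of order `n` with `N` oscillators,
natural frequencies `ν` and coupling strength `κ`:
`θ_i'(t) = ν_i + (κ/N) S(θ_i(t)) Σ_j I_n(θ_j(t))` for all `t ≥ 0`. -/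
def IsWinfreeSol (n N : ℕ) (ν : Fin N → ℝ) (κ : ℝ) (θ : Fin N → ℝ → ℝ) : Prop :=
  ∀ i : Fin N, ∀ t : ℝ, 0 ≤ t →
    HasDerivAt (θ i)
      (ν i + (κ / N) * sens (θ i t) * ∑ j : Fin N, influence n (θ j t)) t

/-!
Since `|S| ≤ 1` and `0 ≤ I_n ≤ I_n(0) = 2^n a_n`, the interaction term
`(κ/N) S(θ_i) Σ_j I_n(θ_j)` is at most `|κ| 2^n a_n` in absolute value. Every phase therefore
moves at speed at least `ν_i - |κ| 2^n a_n`, and the midpoint of two phases at least at the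
average of two such bounds.
-/

theorem aW_pos (n : ℕ) : 0 < aW n := by
  unfold aW
  positivity

theorem abs_sens_le_one (φ : ℝ) : |sens φ| ≤ 1 := by
  simpa only [sens, abs_neg] using abs_sin_le_one φ

theorem abs_influence_le (n : ℕ) (φ : ℝ) : |influence n φ| ≤ 2 ^ n * aW n := by
  have h_nonneg : 0 ≤ 1 + cos φ := by linarith [neg_one_le_cos φ]
  have h_le_two : 1 + cos φ ≤ 2 := by linarith [cos_le_one φ]
  calc |influence n φ| = (1 + cos φ) ^ n * aW n := by
        rw [influence, abs_of_nonneg (mul_nonneg (aW_pos n).le (pow_nonneg h_nonneg n)), mul_comm]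
    _ ≤ 2 ^ n * aW n := by gcongr; exact (aW_pos n).le

theorem abs_sum_influence_le (n : ℕ) {ι : Type*} (s : Finset ι) (x : ι → ℝ) :
    |∑ j ∈ s, influence n (x j)| ≤ s.card * (2 ^ n * aW n) := by
  rw [← nsmul_eq_mul]
  exact (s.abs_sum_le_sum_abs _).trans
    (s.sum_le_card_nsmul _ _ fun j _ => abs_influence_le n (x j))

theorem abs_interaction_le (n : ℕ) {N : ℕ} (κ φ : ℝ) (x : Fin N → ℝ) :
    |κ / N * sens φ * ∑ j, influence n (x j)| ≤ |κ| * 2 ^ n * aW n := by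
  have h_amp : 0 ≤ |κ| * 2 ^ n * aW n := mul_nonneg (by positivity) (aW_pos n).le
  have h_sum : |∑ j, influence n (x j)| ≤ N * (2 ^ n * aW n) := by
    simpa only [Finset.card_univ, Fintype.card_fin] using abs_sum_influence_le n Finset.univ x
  calc |κ / N * sens φ * ∑ j, influence n (x j)|
      = |κ| / N * |sens φ| * |∑ j, influence n (x j)| := by
        rw [abs_mul, abs_mul, abs_div, Nat.abs_cast]
    _ ≤ |κ| / N * 1 * (N * (2 ^ n * aW n)) := by
        gcongr
        exact abs_sens_le_one φ
    _ = (N / N : ℝ) * (|κ| * 2 ^ n * aW n) := by ring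
    -- Only an inequality: `N / N = 0` when `N = 0`.
    _ ≤ |κ| * 2 ^ n * aW n := mul_le_of_le_one_left h_amp (div_self_le_one _)

namespace IsWinfreeSol

variable {n N : ℕ} {ν : Fin N → ℝ} {κ : ℝ} {θ : Fin N → ℝ → ℝ} {t : ℝ}

theorem differentiableAt (hθ : IsWinfreeSol n N ν κ θ) (i : Fin N) (ht : 0 ≤ t) :
    DifferentiableAt ℝ (θ i) t :=
  (hθ i t ht).differentiableAt

theorem differentiableAt_midpoint (hθ : IsWinfreeSol n N ν κ θ) (i j : Fin N) (ht : 0 ≤ t) :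
    DifferentiableAt ℝ (fun s => (θ i s + θ j s) / 2) t :=
  ((hθ.differentiableAt i ht).add (hθ.differentiableAt j ht)).div_const 2

theorem sub_le_deriv (hθ : IsWinfreeSol n N ν κ θ) (i : Fin N) (ht : 0 ≤ t) :
    ν i - |κ| * 2 ^ n * aW n ≤ deriv (θ i) t := by
  rw [(hθ i t ht).deriv, sub_eq_add_neg]
  gcongr
  exact neg_le_of_abs_le (abs_interaction_le n κ (θ i t) fun j => θ j t)

theorem sub_le_deriv_midpoint (hθ : IsWinfreeSol n N ν κ θ) (i j : Fin N) (ht : 0 ≤ t) :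
    (ν i + ν j) / 2 - |κ| * 2 ^ n * aW n ≤ deriv (fun s => (θ i s + θ j s) / 2) t := by
  rw [deriv_div_const, deriv_fun_add (hθ.differentiableAt i ht) (hθ.differentiableAt j ht)]
  linarith [hθ.sub_le_deriv i ht, hθ.sub_le_deriv j ht]

end IsWinfreeSol

theorem stmt13_general {n N : ℕ} {ν : Fin N → ℝ} {κ : ℝ} {θ : Fin N → ℝ → ℝ}
    (hθ : IsWinfreeSol n N ν κ θ) (i j : Fin N)
    (hκ : |κ| < (ν i + ν j) / 2 / (2 ^ n * aW n)) :
    (0 < (ν i + ν j) / 2 - |κ| * 2 ^ n * aW n) ∧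
    (∀ t : ℝ, 0 ≤ t →
      (ν i + ν j) / 2 - |κ| * 2 ^ n * aW n ≤ deriv (fun s => (θ i s + θ j s) / 2) t) ∧
    StrictMonoOn (fun s => (θ i s + θ j s) / 2) (Set.Ici (0 : ℝ)) := by
  have h_pos : 0 < (ν i + ν j) / 2 - |κ| * 2 ^ n * aW n := by
    rw [sub_pos, mul_assoc]
    exact (lt_div_iff₀ (mul_pos (by positivity) (aW_pos n))).mp hκ
  refine ⟨h_pos, fun t ht => hθ.sub_le_deriv_midpoint i j ht, ?_⟩
  refine strictMonoOn_of_deriv_pos (convex_Ici 0) (fun t ht => ?_) fun t ht => ?_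
  · exact (hθ.differentiableAt_midpoint i j ht).continuousAt.continuousWithinAt
  · exact h_pos.trans_le (hθ.sub_le_deriv_midpoint i j (interior_subset ht))

/-- Strict increase of the mid-phase `A(t) = (θ_M(t) + θ_m(t))/2` for an identical
ensemble with `0 < κ < ν/(2^n a_n)`. -/
theorem stmt13 (n N : ℕ) (hn : 0 < n) (hN : 0 < N) (ν : ℝ) (hν : 0 < ν) (κ : ℝ)
    (hκ0 : 0 < κ) (hκ : κ < ν / (2 ^ n * aW n))
    (θ : Fin N → ℝ → ℝ) (hθ : IsWinfreeSol n N (fun _ => ν) κ θ)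
    (M m : Fin N)
    (hM : ∀ t : ℝ, 0 ≤ t → ∀ i : Fin N, θ i t ≤ θ M t)
    (hm : ∀ t : ℝ, 0 ≤ t → ∀ i : Fin N, θ m t ≤ θ i t) :
    (0 < ν - κ * 2 ^ n * aW n) ∧
    (∀ t : ℝ, 0 ≤ t →
      ν - κ * 2 ^ n * aW n ≤ deriv (fun s => (θ M s + θ m s) / 2) t) ∧
    StrictMonoOn (fun s => (θ M s + θ m s) / 2) (Set.Ici (0 : ℝ)) := by
  simpa only [add_self_div_two, abs_of_pos hκ0] using
    stmt13_general hθ M m (by simpa only [add_self_div_two, abs_of_pos hκ0] using hκ)
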